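/- arXiv:2303.02790 — 2 statements merged into one kernel-verified Lean document; each statement's English description precedes it below -/
import Mathlib

section
/- Let σ_1, σ_2, σ_3 be the Pauli matrices and σ_0 = I the 2×2 identity, and define the Euclidean gamma matrices as the 4×4 complex matrices written in 2×2 blocks as γ_0 = [[0, I], [I, 0]] and γ_j = [[0, i σ_j], [-i σ_j, 0]] for j = 1,2,3. For a > 0 and k ∈ ℝ^4 define the Wilson–Dirac symbol (with Wilson parameter r = 1) D(k) = Σ_{μ=0}^3 i γ_0 γ_μ a^{-1} sin(k_μ a) + a^{-1} γ_0 Σ_{μ=0}^3 (1 - cos(k_μ a)). Then D(k)^* D(k) = [ Σ_μ a^{-2} sin^2(k_μ a) + ( a^{-1} Σ_μ (1 - cos(k_μ a)) )^2 ] · I_4, and for k ∈ [-π/a, π/a)^4 the matrix D(k) is invertible if and only if k ≠ 0. -/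
open scoped Real
open Matrix

/-- The Pauli matrices `σ_1, σ_2, σ_3` (with `σ_0 = I` for convenience). -/
noncomputable def pauli : Fin 4 → Matrix (Fin 2) (Fin 2) ℂ :=
  ![1, !![0, 1; 1, 0], !![0, -Complex.I; Complex.I, 0], !![1, 0; 0, -1]]

/-- The Euclidean gamma matrices, written in `2×2` blocks as `γ_0 = [[0, I], [I, 0]]` and
`γ_j = [[0, i σ_j], [-i σ_j, 0]]` for `j = 1, 2, 3` (as `4×4` matrices via
`Fin 2 ⊕ Fin 2 ≃ Fin 4`). -/
noncomputable def gammaMat (μ : Fin 4) : Matrix (Fin 4) (Fin 4) ℂ :=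
  Matrix.reindex finSumFinEquiv finSumFinEquiv
    (if μ = 0 then Matrix.fromBlocks 0 1 1 0
     else Matrix.fromBlocks 0 (Complex.I • pauli μ) (-(Complex.I • pauli μ)) 0)

/-- The Wilson–Dirac symbol with Wilson parameter `r = 1`:
`D(k) = ∑_μ i γ_0 γ_μ a⁻¹ sin(k_μ a) + a⁻¹ γ_0 ∑_μ (1 - cos(k_μ a))`. -/
noncomputable def wilsonDirac (a : ℝ) (k : Fin 4 → ℝ) : Matrix (Fin 4) (Fin 4) ℂ :=
  (∑ μ : Fin 4, (Complex.I * ((Real.sin (k μ * a) / a : ℝ) : ℂ)) • (gammaMat 0 * gammaMat μ))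
    + (((a⁻¹ * ∑ μ : Fin 4, (1 - Real.cos (k μ * a)) : ℝ)) : ℂ) • gammaMat 0

/-!
Write `p_μ = a⁻¹ sin(k_μ a)`, `m = a⁻¹ ∑_μ (1 - cos(k_μ a))` and `P = ∑_μ p_μ γ_μ`. Then
`D(k) = γ_0 (m + i P)` with `γ_0` a self-adjoint unitary, and the Clifford relations give
`P² = |p|²`, so `D(k)* D(k) = (m - i P) (m + i P) = |p|² + m²`. The momentum `p` also vanishes at
the doublers, where `k_μ ∈ {0, ±π/a}`, but `m` vanishes only where every `cos(k_μ a)` is `1`.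
-/

/-- Self-adjoint Clifford generators of Euclidean signature, i.e.
`γ_μ* = γ_μ` and `γ_μ γ_ν + γ_ν γ_μ = 2 δ_μν`. The diagonal relation is stated as `γ_μ² = 1`. -/
structure IsCliffordFamily {ι A : Type*} [Semiring A] [Star A] (γ : ι → A) : Prop where
  isSelfAdjoint : ∀ μ, IsSelfAdjoint (γ μ)
  mul_self : ∀ μ, γ μ * γ μ = 1
  anticommute : Pairwise fun μ ν => γ μ * γ ν + γ ν * γ μ = 0

section GammaMatrices

theorem isCliffordFamily_pauli : IsCliffordFamily fun j : Fin 3 => pauli j.succ where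
  isSelfAdjoint j := by
    ext r s
    fin_cases j <;> fin_cases r <;> fin_cases s <;> simp [pauli]
  mul_self j := by
    fin_cases j <;> simp [pauli, one_fin_two]
  anticommute j l hjl := by
    ext r s
    fin_cases j <;> fin_cases l <;> first
      | exact absurd rfl hjl
      | fin_cases r <;> fin_cases s <;> simp [pauli]

/-- The chiral doubling `γ_0 = [[0, I], [I, 0]]`, `γ_{j+1} = [[0, i σ_j], [-i σ_j, 0]]` of a
family of square matrices; it turns `n` Clifford generators into `n + 1` of twice the size. -/
noncomputable def chiralGamma {l : Type*} [DecidableEq l] {n : ℕ} (σ : Fin n → Matrix l l ℂ) :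
    Fin (n + 1) → Matrix (l ⊕ l) (l ⊕ l) ℂ :=
  Fin.cons (fromBlocks 0 1 1 0)
    fun j => fromBlocks 0 (Complex.I • σ j) (-(Complex.I • σ j)) 0

theorem isCliffordFamily_chiralGamma {l : Type*} [Fintype l] [DecidableEq l] {n : ℕ}
    {σ : Fin n → Matrix l l ℂ} (hσ : IsCliffordFamily σ) :
    IsCliffordFamily (chiralGamma σ) where
  isSelfAdjoint μ := by
    cases μ using Fin.cases with
    | zero =>
      simp [chiralGamma, IsSelfAdjoint, star_eq_conjTranspose, fromBlocks_conjTranspose]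
    | succ j =>
      have hj : (σ j)ᴴ = σ j := hσ.isSelfAdjoint j
      simp [chiralGamma, IsSelfAdjoint, star_eq_conjTranspose, fromBlocks_conjTranspose, hj]
  mul_self μ := by
    cases μ using Fin.cases with
    | zero => simp [chiralGamma, fromBlocks_multiply]
    | succ j => simp [chiralGamma, fromBlocks_multiply, smul_smul, hσ.mul_self j]
  anticommute μ ν hμν := by
    cases μ using Fin.cases with
    | zero =>
      cases ν using Fin.cases with
      | zero => exact absurd rfl hμν
      | succ l => simp [chiralGamma, fromBlocks_multiply, fromBlocks_add]
    | succ j =>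
      cases ν using Fin.cases with
      | zero => simp [chiralGamma, fromBlocks_multiply, fromBlocks_add]
      | succ l =>
        have hjl : σ j * σ l + σ l * σ j = 0 := hσ.anticommute fun h => hμν (congrArg Fin.succ h)
        simp [chiralGamma, fromBlocks_multiply, fromBlocks_add, smul_smul, hjl]

theorem IsCliffordFamily.reindex {ι m n R : Type*} [Fintype m] [DecidableEq m] [Fintype n]
    [DecidableEq n] [Semiring R] [Star R] {γ : ι → Matrix m m R} (hγ : IsCliffordFamily γ)
    (e : m ≃ n) : IsCliffordFamily fun μ => Matrix.reindex e e (γ μ) where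
  isSelfAdjoint μ :=
    (conjTranspose_reindex e e (γ μ)).trans (congrArg (Matrix.reindex e e) (hγ.isSelfAdjoint μ))
  mul_self μ := by simp [hγ.mul_self]
  anticommute μ ν hμν := by
    simp only [reindex_apply, submatrix_mul_equiv]
    exact congrArg (Matrix.reindex e e) (hγ.anticommute hμν)

theorem gammaMat_eq_reindex_chiralGamma (μ : Fin 4) :
    gammaMat μ =
      Matrix.reindex finSumFinEquiv finSumFinEquiv
        (chiralGamma (fun j : Fin 3 => pauli j.succ) μ) := by
  cases μ using Fin.cases <;> simp [gammaMat, chiralGamma]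

theorem isCliffordFamily_gammaMat : IsCliffordFamily gammaMat := by
  simpa only [← gammaMat_eq_reindex_chiralGamma] using
    (isCliffordFamily_chiralGamma isCliffordFamily_pauli).reindex finSumFinEquiv

end GammaMatrices

section StarAlgebra

theorem sum_mul_self_of_pairwise_anticommute {ι R : Type*} [NonUnitalNonAssocSemiring R]
    {s : Finset ι} {f : ι → R}
    (hf : (s : Set ι).Pairwise fun i j => f i * f j + f j * f i = 0) :
    (∑ i ∈ s, f i) * ∑ i ∈ s, f i = ∑ i ∈ s, f i * f i := by
  classical
  induction s using Finset.induction_on with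
  | empty => simp
  | insert i s hi ih =>
    rw [Finset.coe_insert, Set.pairwise_insert] at hf
    have cross : f i * ∑ j ∈ s, f j + (∑ j ∈ s, f j) * f i = 0 := by
      rw [Finset.mul_sum, Finset.sum_mul, ← Finset.sum_add_distrib]
      exact Finset.sum_eq_zero fun j hj => (hf.2 j hj (ne_of_mem_of_not_mem hj hi).symm).1
    rw [Finset.sum_insert hi, Finset.sum_insert hi, ← ih hf.1]
    calc (f i + ∑ j ∈ s, f j) * (f i + ∑ j ∈ s, f j)
        = f i * f i + (f i * ∑ j ∈ s, f j + (∑ j ∈ s, f j) * f i)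
            + (∑ j ∈ s, f j) * ∑ j ∈ s, f j := by
          simp only [add_mul, mul_add]; abel
      _ = f i * f i + (∑ j ∈ s, f j) * ∑ j ∈ s, f j := by rw [cross, add_zero]

theorem isUnit_iff_ne_zero_of_star_mul_self_eq_smul_one {K A : Type*} [Field K] [Ring A]
    [StarRing A] [Algebra K A] [Nontrivial A] {x : A} [IsStarNormal x] {c : K}
    (hx : star x * x = c • 1) : IsUnit x ↔ c ≠ 0 := by
  have hc : IsUnit (c • 1 : A) ↔ c ≠ 0 := by
    refine ⟨?_, fun h => (isUnit_smul_iff (Units.mk0 c h) (1 : A)).2 isUnit_one⟩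
    rintro h rfl
    exact not_isUnit_zero (zero_smul K (1 : A) ▸ h)
  have hcomm : Commute (star x) x := star_comm_self' x
  rw [← hc, ← hx, hcomm.isUnit_mul_iff, isUnit_star, and_self]

variable {ι A : Type*} [Fintype ι] [Ring A] [StarRing A] [Algebra ℂ A]

/-- The Feynman slash `∑_μ p_μ γ_μ` of a real momentum `p`. -/
noncomputable def slash (γ : ι → A) (p : ι → ℝ) : A :=
  ∑ μ, (p μ : ℂ) • γ μ

/-- The Euclidean Dirac symbol `m + i ∑_μ p_μ γ_μ` of mass `m`. -/
noncomputable def diracSymbol (γ : ι → A) (m : ℝ) (p : ι → ℝ) : A :=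
  (m : ℂ) • 1 + Complex.I • slash γ p

namespace IsCliffordFamily

variable {γ : ι → A}

theorem slash_mul_self (hγ : IsCliffordFamily γ) (p : ι → ℝ) :
    slash γ p * slash γ p = ((∑ μ, p μ ^ 2 : ℝ) : ℂ) • 1 := by
  have anticommute : Pairwise fun μ ν =>
      ((p μ : ℂ) • γ μ) * ((p ν : ℂ) • γ ν) + ((p ν : ℂ) • γ ν) * ((p μ : ℂ) • γ μ) = 0 := by
    intro μ ν hμν
    rw [smul_mul_smul_comm, smul_mul_smul_comm, mul_comm (p ν : ℂ), ← smul_add,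
      hγ.anticommute hμν, smul_zero]
  rw [slash, sum_mul_self_of_pairwise_anticommute fun μ _ ν _ hμν => anticommute hμν]
  simp only [smul_mul_smul_comm, hγ.mul_self, ← Finset.sum_smul, Complex.ofReal_sum,
    Complex.ofReal_mul, sq]

variable [StarModule ℂ A]

theorem isSelfAdjoint_slash (hγ : IsCliffordFamily γ) (p : ι → ℝ) :
    IsSelfAdjoint (slash γ p) := by
  simp [slash, IsSelfAdjoint, star_sum, (hγ.isSelfAdjoint _).star_eq]

theorem star_diracSymbol (hγ : IsCliffordFamily γ) (m : ℝ) (p : ι → ℝ) :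
    star (diracSymbol γ m p) = (m : ℂ) • 1 - Complex.I • slash γ p := by
  simp [diracSymbol, (hγ.isSelfAdjoint_slash p).star_eq, sub_eq_add_neg]

theorem isStarNormal_diracSymbol (hγ : IsCliffordFamily γ) (m : ℝ) (p : ι → ℝ) :
    IsStarNormal (diracSymbol γ m p) where
  star_comm_self := by
    have hcomm : Commute ((m : ℂ) • (1 : A)) (Complex.I • slash γ p) :=
      (Commute.one_left _).smul_left _
    rw [hγ.star_diracSymbol]
    exact ((Commute.refl _).add_right hcomm).sub_left (hcomm.symm.add_right (Commute.refl _))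

theorem star_diracSymbol_mul_self (hγ : IsCliffordFamily γ) (m : ℝ) (p : ι → ℝ) :
    star (diracSymbol γ m p) * diracSymbol γ m p = ((∑ μ, p μ ^ 2 + m ^ 2 : ℝ) : ℂ) • 1 := by
  calc star (diracSymbol γ m p) * diracSymbol γ m p
      = ((m : ℂ) ^ 2) • 1 + slash γ p * slash γ p := by
        rw [hγ.star_diracSymbol, diracSymbol]
        simp only [sub_mul, mul_add, smul_mul_smul_comm, one_mul, mul_one, Complex.I_mul_I,
          mul_comm Complex.I (m : ℂ), neg_smul, one_smul, sq]
        abel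
    _ = ((∑ μ, p μ ^ 2 + m ^ 2 : ℝ) : ℂ) • 1 := by
        rw [hγ.slash_mul_self, ← add_smul, add_comm, ← Complex.ofReal_pow, ← Complex.ofReal_add]

end IsCliffordFamily

end StarAlgebra

section Trigonometry

theorem sum_one_sub_cos_eq_zero_iff {ι : Type*} [Fintype ι] (x : ι → ℝ) :
    ∑ μ, (1 - Real.cos (x μ)) = 0 ↔ ∀ μ, Real.cos (x μ) = 1 := by
  rw [Finset.sum_eq_zero_iff_of_nonneg fun μ _ => sub_nonneg.2 (Real.cos_le_one (x μ))]
  simp only [Finset.mem_univ, true_imp_iff, sub_eq_zero, eq_comm (a := (1 : ℝ))]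

theorem forall_cos_mul_eq_one_iff {ι : Type*} {a : ℝ} (ha : a ≠ 0) {k : ι → ℝ}
    (hk : ∀ μ, |k μ * a| < 2 * π) : (∀ μ, Real.cos (k μ * a) = 1) ↔ k = 0 := by
  simp only [funext_iff, Pi.zero_apply]
  refine forall_congr' fun μ => ?_
  rw [Real.cos_eq_one_iff_of_lt_of_lt (abs_lt.1 (hk μ)).1 (abs_lt.1 (hk μ)).2,
    mul_eq_zero_iff_right ha]

theorem abs_mul_lt_two_pi_of_abs_le_pi_div {a x : ℝ} (ha : 0 < a) (hx : |x| ≤ π / a) :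
    |x * a| < 2 * π := by
  rw [abs_mul, abs_of_pos ha]
  linarith [(le_div_iff₀ ha).1 hx, Real.pi_pos]

end Trigonometry

section WilsonSymbol

variable {ι A : Type*} [Fintype ι] [Ring A] [Algebra ℂ A]

/-- The momentum-dependent mass `a⁻¹ ∑_μ (1 - cos(k_μ a))` contributed by the Wilson term. -/
noncomputable def wilsonMass (a : ℝ) (k : ι → ℝ) : ℝ :=
  a⁻¹ * ∑ μ, (1 - Real.cos (k μ * a))

/-- The Wilson–Dirac symbol of an arbitrary family `γ`, with `γ o` in the role of `γ_0`. -/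
noncomputable def wilsonSymbol (γ : ι → A) (o : ι) (a : ℝ) (k : ι → ℝ) : A :=
  (∑ μ, (Complex.I * ((Real.sin (k μ * a) / a : ℝ) : ℂ)) • (γ o * γ μ))
    + (wilsonMass a k : ℂ) • γ o

theorem wilsonSymbol_eq_mul_diracSymbol (γ : ι → A) (o : ι) (a : ℝ) (k : ι → ℝ) :
    wilsonSymbol γ o a k =
      γ o * diracSymbol γ (wilsonMass a k) fun μ => Real.sin (k μ * a) / a := by
  simp only [wilsonSymbol, diracSymbol, slash, mul_add, mul_smul_comm, mul_one, Finset.mul_sum,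
    Finset.smul_sum, smul_smul]
  exact add_comm _ _

theorem sum_sin_sq_add_wilsonMass_sq_eq_zero_iff {a : ℝ} (ha : a ≠ 0) (k : ι → ℝ) :
    ∑ μ, Real.sin (k μ * a) ^ 2 / a ^ 2 + wilsonMass a k ^ 2 = 0 ↔
      ∀ μ, Real.cos (k μ * a) = 1 := by
  have hmass : wilsonMass a k = 0 ↔ ∀ μ, Real.cos (k μ * a) = 1 := by
    rw [wilsonMass, mul_eq_zero_iff_left (inv_ne_zero ha), sum_one_sub_cos_eq_zero_iff]
  rw [add_eq_zero_iff_of_nonneg (by positivity) (by positivity), sq_eq_zero_iff, hmass,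
    and_iff_right_iff_imp]
  intro hcos
  simp [Real.sin_sq, hcos]

variable [StarRing A] [StarModule ℂ A] {γ : ι → A}

theorem star_wilsonSymbol_mul_self (hγ : IsCliffordFamily γ) (o : ι) (a : ℝ) (k : ι → ℝ) :
    star (wilsonSymbol γ o a k) * wilsonSymbol γ o a k =
      ((∑ μ, Real.sin (k μ * a) ^ 2 / a ^ 2 + wilsonMass a k ^ 2 : ℝ) : ℂ) • 1 := by
  rw [wilsonSymbol_eq_mul_diracSymbol, star_mul, (hγ.isSelfAdjoint o).star_eq, mul_assoc,
    ← mul_assoc (γ o), hγ.mul_self, one_mul, hγ.star_diracSymbol_mul_self]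
  simp only [div_pow]

theorem isUnit_wilsonSymbol_iff [Nontrivial A] (hγ : IsCliffordFamily γ) (o : ι) {a : ℝ}
    (ha : a ≠ 0) (k : ι → ℝ) :
    IsUnit (wilsonSymbol γ o a k) ↔ ¬∀ μ, Real.cos (k μ * a) = 1 := by
  obtain ⟨u, hu⟩ : IsUnit (γ o) := isUnit_iff_exists.2 ⟨γ o, hγ.mul_self o, hγ.mul_self o⟩
  have := hγ.isStarNormal_diracSymbol (wilsonMass a k) fun μ => Real.sin (k μ * a) / a
  rw [wilsonSymbol_eq_mul_diracSymbol, ← hu, Units.isUnit_units_mul,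
    isUnit_iff_ne_zero_of_star_mul_self_eq_smul_one (hγ.star_diracSymbol_mul_self _ _),
    Complex.ofReal_ne_zero, ← sum_sin_sq_add_wilsonMass_sq_eq_zero_iff ha]
  simp only [div_pow, ne_eq]

theorem wilsonDirac_no_doubling_general [Nontrivial A] (hγ : IsCliffordFamily γ) (o : ι) {a : ℝ}
    (ha : a ≠ 0) (k : ι → ℝ) :
    star (wilsonSymbol γ o a k) * wilsonSymbol γ o a k =
        ((∑ μ, Real.sin (k μ * a) ^ 2 / a ^ 2 + wilsonMass a k ^ 2 : ℝ) : ℂ) • 1 ∧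
      ((∀ μ, |k μ * a| < 2 * π) → (IsUnit (wilsonSymbol γ o a k) ↔ k ≠ 0)) :=
  ⟨star_wilsonSymbol_mul_self hγ o a k, fun hk => by
    rw [isUnit_wilsonSymbol_iff hγ o ha, forall_cos_mul_eq_one_iff ha hk]⟩

end WilsonSymbol

/-- `D(k)* D(k) = (∑_μ a⁻² sin²(k_μ a) + (a⁻¹ ∑_μ (1 - cos(k_μ a)))²) I₄`, and for
`k ∈ [-π/a, π/a)⁴` the Wilson–Dirac matrix `D(k)` is invertible if and only if `k ≠ 0`:
absence of fermion doublers. -/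
theorem wilsonDirac_no_doubling (a : ℝ) (ha : 0 < a) (k : Fin 4 → ℝ) :
    (wilsonDirac a k)ᴴ * wilsonDirac a k =
        (((∑ μ : Fin 4, (Real.sin (k μ * a)) ^ 2 / a ^ 2 +
            (a⁻¹ * ∑ μ : Fin 4, (1 - Real.cos (k μ * a))) ^ 2 : ℝ)) : ℂ) •
          (1 : Matrix (Fin 4) (Fin 4) ℂ) ∧
      ((∀ μ, -(π / a) ≤ k μ ∧ k μ < π / a) →
        (IsUnit (wilsonDirac a k) ↔ k ≠ 0)) := by
  have general := wilsonDirac_no_doubling_general isCliffordFamily_gammaMat 0 ha.ne' k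
  exact general.imp_right fun h hk =>
    h fun μ => abs_mul_lt_two_pi_of_abs_le_pi_div ha (abs_le.2 ⟨(hk μ).1, (hk μ).2.le⟩)
end

section
/- For every κ ∈ (0, π] there exists a constant c > 0, depending only on κ, such that for all a > 0 and all k ∈ [-π/a, π/a]^4 with Euclidean norm |k| ≥ κ/a, one has Σ_{μ=0}^3 a^{-2} sin^2(k_μ a) + ( a^{-1} Σ_{μ=0}^3 (1 - cos(k_μ a)) )^2 ≥ c · a^{-2}. Consequently, with D(k) the Wilson–Dirac symbol D(k) = Σ_μ i γ_0 γ_μ a^{-1} sin(k_μ a) + a^{-1} γ_0 Σ_μ (1 - cos(k_μ a)) (Wilson parameter r = 1), D(k) is invertible and the operator norm of D(k)^{-1} is at most a/√c. -/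
open scoped Real
open Matrix

/-!
The gamma matrices are Hermitian and satisfy `γ_μ γ_ν + γ_ν γ_μ = 2 δ_μν`, so the slashed momentum
`Q = ∑_μ s_μ γ_μ` is Hermitian with `Q² = ∑_μ s_μ²`. Pulling out the unitary `γ_0` gives
`D = γ_0 (m + i Q)` with `s_μ = sin(k_μ a)/a` and `m = a⁻¹ ∑_μ (1 - cos(k_μ a))`, whence
`D* D = m² + ∑_μ s_μ²`: this scalar governs both invertibility and the norm of `D⁻¹`.

Since every `1 - cos` is nonnegative, `(∑_μ (1 - cos x_μ))² ≥ ∑_μ (1 - cos x_μ)²`, which decouples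
the coordinates: `sin² x + (1 - cos x)² = 2 (1 - cos x) = 4 sin² (x/2) ≥ (2x/π)²` for `|x| ≤ π`.
Summing gives `D* D ≥ (2|k|/π)²`, hence `c = (2κ/π)²`.
-/

section Clifford

variable {R A ι : Type*} [CommSemiring R] [Semiring A] [Algebra R A]

theorem sum_smul_mul_self_of_anticommute {e : ι → A} (he : ∀ i, e i * e i = 1)
    (hanti : Pairwise fun i j => e i * e j + e j * e i = 0) (s : Finset ι) (x : ι → R) :
    (∑ i ∈ s, x i • e i) * ∑ i ∈ s, x i • e i = (∑ i ∈ s, x i ^ 2) • (1 : A) := by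
  classical
  induction s using Finset.induction_on with
  | empty => simp
  | insert i s hi ih =>
    have hcross : (x i • e i) * (∑ j ∈ s, x j • e j) + (∑ j ∈ s, x j • e j) * (x i • e i) = 0 := by
      rw [Finset.mul_sum, Finset.sum_mul, ← Finset.sum_add_distrib]
      refine Finset.sum_eq_zero fun j hj => ?_
      rw [smul_mul_smul_comm, smul_mul_smul_comm, mul_comm (x j), ← smul_add,
        hanti (ne_of_mem_of_not_mem hj hi).symm, smul_zero]
    calc (∑ j ∈ insert i s, x j • e j) * ∑ j ∈ insert i s, x j • e j
        = (x i • e i) * (x i • e i)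
          + ((x i • e i) * (∑ j ∈ s, x j • e j) + (∑ j ∈ s, x j • e j) * (x i • e i))
          + (∑ j ∈ s, x j • e j) * ∑ j ∈ s, x j • e j := by
          rw [Finset.sum_insert hi, add_mul, mul_add, mul_add]
          simp only [add_assoc]
      _ = (∑ j ∈ insert i s, x j ^ 2) • (1 : A) := by
          rw [hcross, add_zero, ih, smul_mul_smul_comm, he, Finset.sum_insert hi, add_smul, sq]

end Clifford

theorem star_mul_add_star_mul_eq_zero {A : Type*} [Semiring A] [Star A] {u v : A}
    (hu : star u * u = 1) (h : u * star v + v * star u = 0) :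
    star u * v + star v * u = 0 :=
  calc star u * v + star v * u = star u * (u * star v + v * star u) * u := by
        rw [mul_add, add_mul, ← mul_assoc, hu, one_mul, mul_assoc (star u), mul_assoc v, hu,
          mul_one, add_comm]
    _ = 0 := by rw [h, mul_zero, zero_mul]

theorem star_mul_self_smul_one_add_I_smul {A : Type*} [Ring A] [StarRing A] [Algebra ℂ A]
    [StarModule ℂ A] {u q : A} (hu : star u * u = 1) (hq : IsSelfAdjoint q) (m : ℝ) :
    star (u * ((m : ℂ) • 1 + Complex.I • q)) * (u * ((m : ℂ) • 1 + Complex.I • q))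
      = ((m ^ 2 : ℝ) : ℂ) • 1 + q * q := by
  have hstar : star ((m : ℂ) • 1 + Complex.I • q) = (m : ℂ) • 1 - Complex.I • q := by
    simp [hq.star_eq, sub_eq_add_neg]
  rw [star_mul, mul_assoc, ← mul_assoc (star u), hu, one_mul, hstar]
  simp only [sub_mul, mul_add, smul_mul_smul_comm, one_mul, mul_one, Complex.I_mul_I,
    mul_comm Complex.I, neg_smul, one_smul]
  push_cast
  rw [sq]
  abel

section Inverse

variable {n 𝕜 : Type*} [Fintype n] [DecidableEq n]

theorem isUnit_of_mul_eq_smul_one [Field 𝕜] {M N : Matrix n n 𝕜} {c : 𝕜} (hc : c ≠ 0)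
    (h : N * M = c • (1 : Matrix n n 𝕜)) : IsUnit M := by
  refine IsUnit.of_mul_eq_one_right (c⁻¹ • N) ?_
  rw [smul_mul_assoc, h, inv_smul_smul₀ hc]

theorem norm_toEuclideanCLM_inv_le_of_conjTranspose_mul_self_eq [RCLike 𝕜] {M : Matrix n n 𝕜}
    {L : ℝ} (hL : 0 < L) (h : Mᴴ * M = (L : 𝕜) • (1 : Matrix n n 𝕜)) :
    ‖Matrix.toEuclideanCLM (𝕜 := 𝕜) M⁻¹‖ ≤ 1 / √L := by
  have hinv : M⁻¹ * star M⁻¹ = (L : 𝕜)⁻¹ • (1 : Matrix n n 𝕜) := by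
    rw [star_eq_conjTranspose, conjTranspose_nonsing_inv, ← Matrix.mul_inv_rev, h]
    refine Matrix.inv_eq_left_inv ?_
    rw [smul_mul_smul_comm, inv_mul_cancel₀ (RCLike.ofReal_ne_zero.2 hL.ne'), one_smul, one_mul]
  rw [one_div, ← Real.sqrt_inv]
  refine Real.le_sqrt_of_sq_le ?_
  calc ‖Matrix.toEuclideanCLM (𝕜 := 𝕜) M⁻¹‖ ^ 2
      = ‖(L : 𝕜)⁻¹ • (1 : EuclideanSpace 𝕜 n →L[𝕜] EuclideanSpace 𝕜 n)‖ := by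
        rw [sq, ← CStarRing.norm_self_mul_star, ← map_star, ← map_mul, hinv, map_smul, map_one]
    _ ≤ ‖(L : 𝕜)⁻¹‖ * 1 := by
        rw [norm_smul]
        gcongr
        exact ContinuousLinearMap.norm_id_le
    _ = L⁻¹ := by rw [mul_one, norm_inv, RCLike.norm_ofReal, abs_of_pos hL]

end Inverse

section Gamma

theorem isHermitian_pauli (μ : Fin 4) : (pauli μ).IsHermitian := by
  ext i j
  fin_cases μ <;> fin_cases i <;> fin_cases j <;> simp [pauli]

theorem pauli_mul_self (μ : Fin 4) : pauli μ * pauli μ = 1 := by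
  ext i j
  fin_cases μ <;> fin_cases i <;> fin_cases j <;> simp [pauli, Matrix.mul_apply]

theorem pauli_mul_add_mul_eq_zero {μ ν : Fin 4} (hμ : μ ≠ 0) (hν : ν ≠ 0) (h : μ ≠ ν) :
    pauli μ * pauli ν + pauli ν * pauli μ = 0 := by
  ext i j
  fin_cases μ <;> fin_cases ν <;> first
    | contradiction
    | fin_cases i <;> fin_cases j <;> simp [pauli]

/-- The upper-right chiral block `B_μ` of `γ_μ = [[0, B_μ], [B_μᴴ, 0]]`; the four matrices
`1, iσ_1, iσ_2, iσ_3` represent the basic quaternions. -/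
noncomputable def gammaBlock (μ : Fin 4) : Matrix (Fin 2) (Fin 2) ℂ :=
  if μ = 0 then 1 else Complex.I • pauli μ

theorem gammaMat_eq_reindexAlgEquiv (μ : Fin 4) :
    gammaMat μ = Matrix.reindexAlgEquiv ℂ ℂ finSumFinEquiv
      (Matrix.fromBlocks 0 (gammaBlock μ) (gammaBlock μ)ᴴ 0) := by
  unfold gammaMat gammaBlock
  split_ifs <;> simp [(isHermitian_pauli μ).eq]

theorem gammaBlock_mem_unitaryGroup (μ : Fin 4) :
    gammaBlock μ ∈ Matrix.unitaryGroup (Fin 2) ℂ := by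
  rw [Matrix.mem_unitaryGroup_iff, star_eq_conjTranspose, gammaBlock]
  split_ifs <;> simp [(isHermitian_pauli μ).eq, pauli_mul_self, smul_smul]

theorem gammaBlock_mul_conjTranspose_add_eq_zero {μ ν : Fin 4} (h : μ ≠ ν) :
    gammaBlock μ * (gammaBlock ν)ᴴ + gammaBlock ν * (gammaBlock μ)ᴴ = 0 := by
  obtain rfl | hμ := eq_or_ne μ 0
  · simp [gammaBlock, h.symm, (isHermitian_pauli ν).eq]
  obtain rfl | hν := eq_or_ne ν 0
  · simp [gammaBlock, hμ, (isHermitian_pauli μ).eq]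
  simpa [gammaBlock, hμ, hν, (isHermitian_pauli _).eq, smul_smul]
    using pauli_mul_add_mul_eq_zero hμ hν h

theorem gammaBlock_conjTranspose_mul_add_eq_zero {μ ν : Fin 4} (h : μ ≠ ν) :
    (gammaBlock μ)ᴴ * gammaBlock ν + (gammaBlock ν)ᴴ * gammaBlock μ = 0 :=
  star_mul_add_star_mul_eq_zero (Matrix.mem_unitaryGroup_iff'.1 (gammaBlock_mem_unitaryGroup μ))
    (gammaBlock_mul_conjTranspose_add_eq_zero h)

theorem isHermitian_gammaMat (μ : Fin 4) : (gammaMat μ).IsHermitian := by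
  rw [gammaMat_eq_reindexAlgEquiv]
  exact (isHermitian_zero.fromBlocks rfl isHermitian_zero).reindex _

theorem gammaMat_mul (μ ν : Fin 4) :
    gammaMat μ * gammaMat ν = Matrix.reindexAlgEquiv ℂ ℂ finSumFinEquiv
      (Matrix.fromBlocks (gammaBlock μ * (gammaBlock ν)ᴴ) 0
        0 ((gammaBlock μ)ᴴ * gammaBlock ν)) := by
  simp [gammaMat_eq_reindexAlgEquiv, Matrix.fromBlocks_multiply]

theorem gammaMat_mul_self (μ : Fin 4) : gammaMat μ * gammaMat μ = 1 := by
  have h := gammaBlock_mem_unitaryGroup μ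
  rw [gammaMat_mul, ← star_eq_conjTranspose, Matrix.mem_unitaryGroup_iff.1 h,
    Matrix.mem_unitaryGroup_iff'.1 h, Matrix.fromBlocks_one, map_one]

theorem pairwise_gammaMat_mul_add_mul_eq_zero :
    Pairwise fun μ ν => gammaMat μ * gammaMat ν + gammaMat ν * gammaMat μ = 0 := by
  intro μ ν h
  rw [gammaMat_mul, gammaMat_mul, ← map_add, Matrix.fromBlocks_add,
    gammaBlock_mul_conjTranspose_add_eq_zero h, gammaBlock_conjTranspose_mul_add_eq_zero h,
    add_zero, Matrix.fromBlocks_zero, map_zero]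

/-- The Feynman slash `∑_μ p_μ γ_μ` of a real four-vector `p`. -/
noncomputable def gammaSlash (p : Fin 4 → ℝ) : Matrix (Fin 4) (Fin 4) ℂ :=
  ∑ μ, (p μ : ℂ) • gammaMat μ

theorem isSelfAdjoint_gammaSlash (p : Fin 4 → ℝ) : IsSelfAdjoint (gammaSlash p) :=
  isSelfAdjoint_sum _ fun μ _ =>
    .smul (Complex.conj_ofReal (p μ)) (isHermitian_gammaMat μ).isSelfAdjoint

theorem gammaSlash_mul_self (p : Fin 4 → ℝ) :
    gammaSlash p * gammaSlash p = ((∑ μ, p μ ^ 2 : ℝ) : ℂ) • 1 := by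
  rw [gammaSlash, sum_smul_mul_self_of_anticommute gammaMat_mul_self
    pairwise_gammaMat_mul_add_mul_eq_zero]
  push_cast
  rfl

theorem wilsonDirac_eq_gammaMat_zero_mul (a : ℝ) (k : Fin 4 → ℝ) :
    wilsonDirac a k = gammaMat 0 *
      (((a⁻¹ * ∑ μ, (1 - Real.cos (k μ * a)) : ℝ) : ℂ) • 1
        + Complex.I • gammaSlash fun μ => Real.sin (k μ * a) / a) := by
  simp only [wilsonDirac, gammaSlash, mul_add, Finset.smul_sum, Finset.mul_sum, smul_smul,
    mul_smul_comm, mul_one]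
  rw [add_comm]

theorem conjTranspose_wilsonDirac_mul_self (a : ℝ) (k : Fin 4 → ℝ) :
    (wilsonDirac a k)ᴴ * wilsonDirac a k =
      ((∑ μ, Real.sin (k μ * a) ^ 2 / a ^ 2
        + (a⁻¹ * ∑ μ, (1 - Real.cos (k μ * a))) ^ 2 : ℝ) : ℂ) • 1 := by
  have hγ : star (gammaMat 0) * gammaMat 0 = 1 := by
    rw [(isHermitian_gammaMat 0).star_eq, gammaMat_mul_self]
  rw [wilsonDirac_eq_gammaMat_zero_mul, ← star_eq_conjTranspose,
    star_mul_self_smul_one_add_I_smul hγ (isSelfAdjoint_gammaSlash _), gammaSlash_mul_self,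
    ← add_smul, ← Complex.ofReal_add, add_comm]
  simp only [div_pow]

end Gamma

section TrigonometricBound

theorem two_div_pi_mul_sq_le_sin_sq_add_one_sub_cos_sq {x : ℝ} (hx : |x| ≤ π) :
    (2 / π * x) ^ 2 ≤ Real.sin x ^ 2 + (1 - Real.cos x) ^ 2 :=
  calc (2 / π * x) ^ 2 = 2 * (2 / π ^ 2 * x ^ 2) := by ring
    _ ≤ 2 * (1 - Real.cos x) := by linarith [Real.cos_le_one_sub_mul_cos_sq hx]
    _ = Real.sin x ^ 2 + (1 - Real.cos x) ^ 2 := by linarith [Real.sin_sq_add_cos_sq x]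

theorem sum_two_div_pi_mul_sq_le {ι : Type*} {s : Finset ι} {x : ι → ℝ}
    (hx : ∀ i ∈ s, |x i| ≤ π) :
    ∑ i ∈ s, (2 / π * x i) ^ 2 ≤
      ∑ i ∈ s, Real.sin (x i) ^ 2 + (∑ i ∈ s, (1 - Real.cos (x i))) ^ 2 :=
  calc ∑ i ∈ s, (2 / π * x i) ^ 2
      ≤ ∑ i ∈ s, (Real.sin (x i) ^ 2 + (1 - Real.cos (x i)) ^ 2) :=
        Finset.sum_le_sum fun i hi => two_div_pi_mul_sq_le_sin_sq_add_one_sub_cos_sq (hx i hi)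
    _ = ∑ i ∈ s, Real.sin (x i) ^ 2 + ∑ i ∈ s, (1 - Real.cos (x i)) ^ 2 :=
        Finset.sum_add_distrib
    _ ≤ ∑ i ∈ s, Real.sin (x i) ^ 2 + (∑ i ∈ s, (1 - Real.cos (x i))) ^ 2 := by
        gcongr
        exact Finset.sum_sq_le_sq_sum_of_nonneg fun i _ => sub_nonneg.2 (Real.cos_le_one _)

theorem two_div_pi_sq_mul_sum_sq_le {ι : Type*} {s : Finset ι} {k : ι → ℝ} {a : ℝ}
    (ha : 0 < a) (hk : ∀ i ∈ s, |k i| ≤ π / a) :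
    (2 / π) ^ 2 * ∑ i ∈ s, k i ^ 2 ≤
      ∑ i ∈ s, Real.sin (k i * a) ^ 2 / a ^ 2 + (a⁻¹ * ∑ i ∈ s, (1 - Real.cos (k i * a))) ^ 2 := by
  have hka : ∀ i ∈ s, |k i * a| ≤ π := fun i hi => by
    simpa only [abs_mul, abs_of_pos ha] using (le_div_iff₀ ha).1 (hk i hi)
  calc (2 / π) ^ 2 * ∑ i ∈ s, k i ^ 2
      = (∑ i ∈ s, (2 / π * (k i * a)) ^ 2) / a ^ 2 := by
        simp only [mul_pow, ← Finset.mul_sum, ← Finset.sum_mul]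
        field_simp
    _ ≤ (∑ i ∈ s, Real.sin (k i * a) ^ 2 + (∑ i ∈ s, (1 - Real.cos (k i * a))) ^ 2) / a ^ 2 := by
        gcongr
        exact sum_two_div_pi_mul_sq_le hka
    _ = _ := by
        rw [add_div, Finset.sum_div, mul_pow, inv_pow, inv_mul_eq_div]

end TrigonometricBound

theorem wilsonDirac_lower_bound_general {κ a : ℝ} (hκ : 0 < κ) (ha : 0 < a) {k : Fin 4 → ℝ}
    (hk : ∀ μ, |k μ| ≤ π / a) (hκk : κ / a ≤ √(∑ μ, k μ ^ 2)) :
    (2 * κ / π) ^ 2 * (a ^ 2)⁻¹ ≤ ∑ μ, Real.sin (k μ * a) ^ 2 / a ^ 2 +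
        (a⁻¹ * ∑ μ, (1 - Real.cos (k μ * a))) ^ 2 ∧
      IsUnit (wilsonDirac a k) ∧
      ‖Matrix.toEuclideanCLM (𝕜 := ℂ) (wilsonDirac a k)⁻¹‖ ≤ a / (2 * κ / π) := by
  have hsq := conjTranspose_wilsonDirac_mul_self a k
  set L := ∑ μ, Real.sin (k μ * a) ^ 2 / a ^ 2 + (a⁻¹ * ∑ μ, (1 - Real.cos (k μ * a))) ^ 2
  have hL : (2 * κ / π / a) ^ 2 ≤ L :=
    calc (2 * κ / π / a) ^ 2 = (2 / π) ^ 2 * (κ / a) ^ 2 := by ring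
      _ ≤ (2 / π) ^ 2 * ∑ μ, k μ ^ 2 := by
        gcongr
        exact (Real.le_sqrt' (by positivity)).1 hκk
      _ ≤ L := two_div_pi_sq_mul_sum_sq_le ha fun μ _ => hk μ
  have hL0 : 0 < L := lt_of_lt_of_le (by positivity) hL
  refine ⟨by rwa [div_pow, div_eq_mul_inv] at hL,
    isUnit_of_mul_eq_smul_one (Complex.ofReal_ne_zero.2 hL0.ne') hsq, ?_⟩
  calc ‖Matrix.toEuclideanCLM (𝕜 := ℂ) (wilsonDirac a k)⁻¹‖
      ≤ 1 / √L := norm_toEuclideanCLM_inv_le_of_conjTranspose_mul_self_eq hL0 hsq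
    _ ≤ 1 / (2 * κ / π / a) :=
        one_div_le_one_div_of_le (by positivity) (Real.le_sqrt_of_sq_le hL)
    _ = a / (2 * κ / π) := one_div_div _ _

/-- On the high-momentum region `|k| ≥ κ/a` of the Brillouin zone `[-π/a, π/a]⁴`, the
Wilson–Dirac symbol is bounded below: `∑_μ a⁻² sin²(k_μ a) + (a⁻¹ ∑_μ (1-cos(k_μ a)))² ≥ c a⁻²`;
consequently `D(k)` is invertible, with operator norm of `D(k)⁻¹` at most `a/√c`. -/
theorem wilsonDirac_lower_bound (κ : ℝ) (hκ0 : 0 < κ) (hκπ : κ ≤ π) :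
    ∃ c : ℝ, 0 < c ∧
      ∀ (a : ℝ), 0 < a → ∀ k : Fin 4 → ℝ,
        (∀ μ, -(π / a) ≤ k μ ∧ k μ ≤ π / a) →
        κ / a ≤ Real.sqrt (∑ μ : Fin 4, (k μ) ^ 2) →
        (∑ μ : Fin 4, (Real.sin (k μ * a)) ^ 2 / a ^ 2 +
              (a⁻¹ * ∑ μ : Fin 4, (1 - Real.cos (k μ * a))) ^ 2 ≥ c * (a ^ 2)⁻¹) ∧
          IsUnit (wilsonDirac a k) ∧
          ‖Matrix.toEuclideanCLM (𝕜 := ℂ) ((wilsonDirac a k)⁻¹)‖ ≤ a / Real.sqrt c := by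
  refine ⟨(2 * κ / π) ^ 2, by positivity, fun a ha k hk hκk => ?_⟩
  rw [Real.sqrt_sq (by positivity)]
  exact wilsonDirac_lower_bound_general hκ0 ha (fun μ => abs_le.2 (hk μ)) hκk
end
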